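/- arXiv:2002.02919 — 2 statements merged into one kernel-verified Lean document; each statement's English description precedes it below -/
import Mathlib

section
/- Let W, B, V, p, ε, η, σ, q be nonnegative real numbers with qε ≤ 1. Then [(1−qε)W + B + εη√p + εη(W + √V)]² + ε²σ²p + ε²σ²(W + √V)² ≤ [(1 − qε + ηε + √2·σε)W + B + εη(√p + √V)]² + ε²σ²(p + 2V). (This is the chain of inequalities established in the proof of Lemma S2, combining the regrouping of the η-terms, the bound (W+√V)² ≤ 2W² + 2V, and the absorption of the term 2ε²σ²W² into the square via the cross term.) -/
/-!
The bracket on the right is `A + s`, where `A ≥ 0` is the bracket on the left and `s = √2 (εσ) W`.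
By `(W + √V)² ≤ 2 W² + 2 V`, the left-hand side exceeds the remaining terms on the right by at most
`A² + 2 (εσ)² W² = A² + s²`, and the cross term of `(A + s)²` is nonnegative.
-/

theorem sq_add_sq_mul_add_sq_le {A c W : ℝ} (hA : 0 ≤ A) (hcW : 0 ≤ c * W) (v : ℝ) :
    A ^ 2 + c ^ 2 * (W + v) ^ 2 ≤ (A + √2 * (c * W)) ^ 2 + 2 * c ^ 2 * v ^ 2 := by
  have sq_shift : (√2 * (c * W)) ^ 2 = 2 * c ^ 2 * W ^ 2 := by
    rw [mul_pow, Real.sq_sqrt zero_le_two]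
    ring
  calc
    A ^ 2 + c ^ 2 * (W + v) ^ 2 ≤ A ^ 2 + c ^ 2 * (2 * (W ^ 2 + v ^ 2)) := by
      gcongr
      exact add_sq_le
    _ = A ^ 2 + (√2 * (c * W)) ^ 2 + 2 * c ^ 2 * v ^ 2 := by
      rw [sq_shift]
      ring
    _ ≤ (A + √2 * (c * W)) ^ 2 + 2 * c ^ 2 * v ^ 2 := by
      gcongr
      exact pow_add_pow_le hA (by positivity) two_ne_zero

theorem stmt_4_general (W B V p ε η σ q : ℝ)
    (hW : 0 ≤ W) (hB : 0 ≤ B) (hV : 0 ≤ V) (_hp : 0 ≤ p) (hε : 0 ≤ ε)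
    (hη : 0 ≤ η) (hσ : 0 ≤ σ) (hqε : q * ε ≤ 1) :
    ((1 - q * ε) * W + B + ε * η * √p + ε * η * (W + √V)) ^ 2
        + ε ^ 2 * σ ^ 2 * p + ε ^ 2 * σ ^ 2 * (W + √V) ^ 2 ≤
      ((1 - q * ε + η * ε + √2 * σ * ε) * W + B + ε * η * (√p + √V)) ^ 2
        + ε ^ 2 * σ ^ 2 * (p + 2 * V) := by
  set A := (1 - q * ε) * W + B + ε * η * √p + ε * η * (W + √V) with hA
  have regroup : (1 - q * ε + η * ε + √2 * σ * ε) * W + B + ε * η * (√p + √V)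
      = A + √2 * (ε * σ * W) := by
    rw [hA]
    ring
  have A_nonneg : 0 ≤ A := by
    have := sub_nonneg.mpr hqε
    positivity
  have absorb : A ^ 2 + (ε * σ) ^ 2 * (W + √V) ^ 2
      ≤ (A + √2 * (ε * σ * W)) ^ 2 + 2 * (ε * σ) ^ 2 * √V ^ 2 :=
    sq_add_sq_mul_add_sq_le A_nonneg (by positivity) √V
  rw [Real.sq_sqrt hV] at absorb
  rw [regroup]
  linear_combination absorb

/-- The chain of inequalities from the proof of Lemma S2. -/
theorem stmt_4 (W B V p ε η σ q : ℝ)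
    (hW : 0 ≤ W) (hB : 0 ≤ B) (hV : 0 ≤ V) (hp : 0 ≤ p) (hε : 0 ≤ ε)
    (hη : 0 ≤ η) (hσ : 0 ≤ σ) (hq : 0 ≤ q) (hqε : q * ε ≤ 1) :
    ((1 - q * ε) * W + B + ε * η * Real.sqrt p + ε * η * (W + Real.sqrt V)) ^ 2
        + ε ^ 2 * σ ^ 2 * p + ε ^ 2 * σ ^ 2 * (W + Real.sqrt V) ^ 2 ≤
      ((1 - q * ε + η * ε + Real.sqrt 2 * σ * ε) * W + B
          + ε * η * (Real.sqrt p + Real.sqrt V)) ^ 2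
        + ε ^ 2 * σ ^ 2 * (p + 2 * V) :=
  stmt_4_general W B V p ε η σ q hW hB hV hp hε hη hσ hqε
end

section
/- Let α ∈ (0,1), C ≥ 0, D ≥ 0, and let (x_k)_{k≥0} be a sequence of nonnegative real numbers satisfying the recursive inequality x_{k+1}² ≤ [(1−α)x_k + C]² + D² for all k ≥ 0. Then for every K ≥ 0, x_K ≤ (1−α)^K·x_0 + C/α + D²/(C + √α·D). (This is the recursion-resolution lemma, Lemma 1 of Dalalyan and Karagulyan, invoked at the end of the proof of Lemma S2 to convert the one-step Wasserstein recursion into the explicit convergence bound of Lemma S2; when D = 0 or C = 0 the last term is interpreted as 0 or D/√α respectively.) -/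
/-!
If `x k` is at most `w + C / α + F` with `w ≥ 0`, then `(1 - α) * x k + C` is at most
`z + (1 - α) * F`, where `z = (1 - α) * w + C / α` because `C / α` is the fixed point of
`t ↦ (1 - α) * t + C`. So the contraction frees up `α * F`, which absorbs the additive term `D ^ 2`
and gives `x (k + 1) ≤ z + F` as soon as `D ^ 2 ≤ 2 * C * F + α * F ^ 2`. The choice
`F = D ^ 2 / (C + √α * D)` satisfies this.
-/

section SqRecursion

variable {𝕜 : Type*} [Field 𝕜] [LinearOrder 𝕜] [IsStrictOrderedRing 𝕜]

lemma sq_le_two_mul_mul_div_add_sq_mul_div_sq {r C D : 𝕜} (hr : 0 < r) (hC : 0 ≤ C) (hD : 0 ≤ D) :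
    D ^ 2 ≤ 2 * C * (D ^ 2 / (C + r * D)) + r ^ 2 * (D ^ 2 / (C + r * D)) ^ 2 := by
  rcases hD.eq_or_lt with rfl | hD
  · simp
  · calc D ^ 2 ≤ D ^ 2 + (C * D / (C + r * D)) ^ 2 := le_add_of_nonneg_right (sq_nonneg _)
      _ = 2 * C * (D ^ 2 / (C + r * D)) + r ^ 2 * (D ^ 2 / (C + r * D)) ^ 2 := by
        field_simp
        ring

lemma add_one_sub_mul_sq_add_le_add_sq {R : Type*} [CommRing R] [LinearOrder R]
    [IsStrictOrderedRing R] {α C F b z : R} (hα0 : 0 ≤ α) (hα1 : α ≤ 1) (hF : 0 ≤ F)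
    (hz : C ≤ α * z) (hb : b ≤ 2 * C * F + α * F ^ 2) :
    (z + (1 - α) * F) ^ 2 + b ≤ (z + F) ^ 2 := by
  have hCF : C * F ≤ α * z * F := mul_le_mul_of_nonneg_right hz hF
  have hFF : 0 ≤ α * (1 - α) * F ^ 2 :=
    mul_nonneg (mul_nonneg hα0 (sub_nonneg.mpr hα1)) (sq_nonneg F)
  calc (z + (1 - α) * F) ^ 2 + b
      ≤ (z + (1 - α) * F) ^ 2 + (2 * (α * z * F) + α * F ^ 2) + α * (1 - α) * F ^ 2 := by linarith
    _ = (z + F) ^ 2 := by ring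

lemma le_of_sq_le_affine_sq_add {α C F b u w y : 𝕜} (hα0 : 0 < α) (hα1 : α ≤ 1) (hC : 0 ≤ C)
    (hF : 0 ≤ F) (hb : b ≤ 2 * C * F + α * F ^ 2) (hu : 0 ≤ u) (hw : 0 ≤ w)
    (huw : u ≤ w + C / α + F) (hy : y ^ 2 ≤ ((1 - α) * u + C) ^ 2 + b) :
    y ≤ (1 - α) * w + C / α + F := by
  have hα : 0 ≤ 1 - α := sub_nonneg.mpr hα1
  have hfix : (1 - α) * (C / α) + C = C / α := by
    field_simp
    ring
  have hz : C ≤ α * ((1 - α) * w + C / α) :=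
    calc C = α * (C / α) := (mul_div_cancel₀ C hα0.ne').symm
      _ ≤ α * ((1 - α) * w + C / α) := by
        gcongr
        exact le_add_of_nonneg_left (mul_nonneg hα hw)
  have haffine : (1 - α) * u + C ≤ (1 - α) * w + C / α + (1 - α) * F :=
    calc (1 - α) * u + C ≤ (1 - α) * (w + C / α + F) + C := by gcongr
      _ = (1 - α) * w + C / α + (1 - α) * F := by linear_combination hfix
  refine le_of_pow_le_pow_left₀ two_ne_zero (by positivity) ?_
  calc y ^ 2 ≤ ((1 - α) * u + C) ^ 2 + b := hy
    _ ≤ ((1 - α) * w + C / α + (1 - α) * F) ^ 2 + b := by gcongr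
    _ ≤ ((1 - α) * w + C / α + F) ^ 2 := add_one_sub_mul_sq_add_le_add_sq hα0.le hα1 hF hz hb

theorem le_pow_mul_add_of_sq_le_affine_sq_add {α C F b : 𝕜} {x : ℕ → 𝕜} (hα0 : 0 < α)
    (hα1 : α ≤ 1) (hC : 0 ≤ C) (hF : 0 ≤ F) (hb : b ≤ 2 * C * F + α * F ^ 2)
    (hx : ∀ k, 0 ≤ x k) (hrec : ∀ k, x (k + 1) ^ 2 ≤ ((1 - α) * x k + C) ^ 2 + b) (K : ℕ) :
    x K ≤ (1 - α) ^ K * x 0 + C / α + F := by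
  induction K with
  | zero =>
    have hE : 0 ≤ C / α := by positivity
    rw [pow_zero, one_mul]
    linarith
  | succ k ih =>
    have hw : 0 ≤ (1 - α) ^ k * x 0 := mul_nonneg (pow_nonneg (sub_nonneg.mpr hα1) k) (hx 0)
    rw [pow_succ', mul_assoc]
    exact le_of_sq_le_affine_sq_add hα0 hα1 hC hF hb (hx k) hw ih (hrec k)

end SqRecursion

/-- Recursion-resolution lemma (Lemma 1 of Dalalyan and Karagulyan): if
`x_{k+1}² ≤ [(1−α)x_k + C]² + D²` for all `k`, with `α ∈ (0,1)`, `C, D ≥ 0` and `x_k ≥ 0`,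
then `x_K ≤ (1−α)^K x_0 + C/α + D²/(C + √α·D)` for every `K`
(the last term interpreted as 0 when `C = D = 0`). -/
theorem stmt_14 (α C D : ℝ) (x : ℕ → ℝ)
    (hα0 : 0 < α) (hα1 : α < 1) (hC : 0 ≤ C) (hD : 0 ≤ D) (hx : ∀ k, 0 ≤ x k)
    (hrec : ∀ k, (x (k + 1)) ^ 2 ≤ ((1 - α) * x k + C) ^ 2 + D ^ 2) :
    ∀ K, x K ≤ (1 - α) ^ K * x 0 + C / α + D ^ 2 / (C + Real.sqrt α * D) := by
  have hgap := sq_le_two_mul_mul_div_add_sq_mul_div_sq (Real.sqrt_pos.mpr hα0) hC hD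
  rw [Real.sq_sqrt hα0.le] at hgap
  exact le_pow_mul_add_of_sq_le_affine_sq_add hα0 hα1.le hC (by positivity) hgap hx hrec
end
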